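/- Let K be a field, let λ = (λ₁ ≥ … ≥ λ_r > 0) and μ = (μ₁ ≥ … ≥ μ_s > 0) be partitions, let n ≥ r + s and q ≥ μ₁ be integers, and let x₁, …, xₙ be pairwise distinct nonzero elements of K. Let ρ be the partition with ρ_j = λ_j + q for 1 ≤ j ≤ r, ρ_j = q for r < j ≤ n − s, and ρ_j = q − μ_{n+1−j} for n − s < j ≤ n. Then det( (x_i^{ρ_j + n − j})_{1≤i,j≤n} ) / det( (x_i^{n−j})_{1≤i,j≤n} ) = (x₁⋯xₙ)^q · Σ_τ (−1)^{|τ|} s_{λ/τ}(x₁,…,xₙ) · s_{μ/τ'}(x₁⁻¹,…,xₙ⁻¹), where the sum is over all partitions τ with at most n parts each of size at most n (equivalently, all partitions, since the remaining terms vanish). In other words, the character of the irreducible GL_n(ℂ)-representation with highest weight (λ₁,…,λ_r,0,…,0,−μ_s,…,−μ₁) equals Σ_τ (−1)^{|τ|} s_{λ/τ}(x) s_{μ/τ'}(x⁻¹). -/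

import Mathlib

/-- A partition: a weakly decreasing sequence of naturals, eventually zero
(`parts 0 = τ₁`, `parts 1 = τ₂`, …). -/
structure NatPartition where
  parts : ℕ → ℕ
  antitone : Antitone parts
  eventually_zero : ∃ K, ∀ j, K ≤ j → parts j = 0

/-- The size `|τ|`, the sum of the parts. -/
noncomputable def NatPartition.size (τ : NatPartition) : ℕ := ∑ᶠ j, τ.parts j

/-- The number of (nonzero) parts of `τ`. -/
noncomputable def NatPartition.length (τ : NatPartition) : ℕ :=
  Set.ncard {j : ℕ | τ.parts j ≠ 0}

/-- The conjugate partition, with 1-based index: `conjugatePart l i = #{ j : l_j ≥ i }`. -/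
noncomputable def conjugatePart (l : ℕ → ℕ) (i : ℕ) : ℕ :=
  Set.ncard {j : ℕ | i ≤ l j}

/-- The complete homogeneous symmetric polynomial of degree `k ∈ ℤ` evaluated at the
`d`-tuple `x` of elements of `K`: `h_k(x)` for `k ≥ 0`, and `0` for `k < 0`. -/
noncomputable def hEval {K : Type*} [CommRing K] {d : ℕ} (x : Fin d → K) (k : ℤ) : K :=
  if 0 ≤ k then MvPolynomial.eval x (MvPolynomial.hsymm (Fin d) K k.toNat) else 0

/-!
Let `M` be the matrix with `n` columns whose first `r` rows are the Jacobi–Trudi rows of `λ` in the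
`h_k(x)` and whose last `n - r` rows are those of `μ` in the `h_k(x⁻¹)`, with the indices running in
opposite directions. Its determinant is computed in two ways.

Laplace expansion along the two blocks of rows: the choices of `r` columns correspond, through
boundary paths, to the partitions `τ` in an `r × (n - r)` box. The two complementary minors are the
skew Jacobi–Trudi determinants of `λ/τ` and `μ/τ'`, and the sign is `(-1)^|τ|`, since the inversions
of the column order are the cells of `τ`.

Multiplication by the matrix of coefficients of the polynomials `∏_{j ≠ i} (1 - x_j t)`: since
`∑_k h_k(x) t^k = ∏_j (1 - x_j t)⁻¹`, every row of `M` becomes a row of powers of the `x_i`, so the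
product is the alternant of `ρ` up to scaling rows and columns. For `λ = μ = ∅` we have `det M = 1`,
which expresses the determinant of the coefficient matrix through the Vandermonde determinant.
-/

section Determinants

open Finset Matrix

variable {R m n α β : Type*} [CommRing R] [DecidableEq n]
  [Fintype α] [DecidableEq α] [Fintype β] [DecidableEq β]

theorem det_ite_mem_range_inl (M : Matrix (α ⊕ β) n R) (e : α ⊕ β ≃ n) {S : Finset n}
    (hS : Set.range (e ∘ Sum.inl) = S) :
    ((of fun a c => if a ∈ univ.map (Function.Embedding.inl : α ↪ α ⊕ β) ↔ c ∈ S
        then M a c else 0).submatrix id e).det =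
      (M.submatrix id e).toBlocks₁₁.det * (M.submatrix id e).toBlocks₂₂.det := by
  rw [← det_fromBlocks_zero₂₁ _ 0]
  congr 1
  ext (i | i) (j | j) <;> simp [← mem_coe, ← hS, toBlocks₁₁, toBlocks₂₂]

variable [Fintype n] [Fintype m] [DecidableEq m]

theorem det_eq_zero_of_card_lt_card_add_card (M : Matrix n n R) {s t : Finset n}
    (hM : ∀ i ∈ s, ∀ j ∈ t, M i j = 0) (hcard : Fintype.card n < #s + #t) : M.det = 0 := by
  rw [det_apply]
  refine sum_eq_zero fun σ _ => ?_
  obtain ⟨i, hi⟩ : (s ∩ t.map σ.toEmbedding).Nonempty :=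
    inter_nonempty_of_card_lt_card_add_card (subset_univ _) (subset_univ _) (by simpa using hcard)
  obtain ⟨his, hit⟩ := mem_inter.1 hi
  obtain ⟨j, hj, rfl⟩ := mem_map.1 hit
  have hprod : ∏ k, M (σ k) k = 0 := prod_eq_zero (mem_univ j) (hM _ his j hj)
  rw [hprod, smul_zero]

theorem det_submatrix_id_equiv (M : Matrix m n R) (e₁ e₂ : m ≃ n) :
    (M.submatrix id e₁).det =
      (Equiv.Perm.sign (e₁.symm.trans e₂) : ℤ) * (M.submatrix id e₂).det := by
  have h := det_permute (e₁.symm.trans e₂) (M.submatrix e₂.symm id)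
  rw [← det_submatrix_equiv_self e₂ (M.submatrix e₂.symm id)] at h
  rw [← det_submatrix_equiv_self e₁.symm (M.submatrix id e₁)]
  simpa [Function.comp_def, Function.id_def] using h

theorem det_eq_sum_powersetCard_det_ite (M : Matrix m n R) (e : m ≃ n) (A : Finset m) :
    (M.submatrix id e).det = ∑ S ∈ powersetCard #A (univ : Finset n),
      ((of fun a c => if a ∈ A ↔ c ∈ S then M a c else 0).submatrix id e).det := by
  simp only [det_apply]
  rw [sum_comm]
  refine sum_congr rfl fun σ _ => ?_
  set T : Finset n := A.map (σ.symm.trans e).toEmbedding with hT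
  have mem_T (c : m) : e c ∈ T ↔ σ c ∈ A := by simp [hT, Equiv.symm_apply_eq]
  rw [← smul_sum, sum_eq_single_of_mem T (by simp [mem_powersetCard, hT])]
  · simp [mem_T]
  · intro S _ hST
    obtain ⟨c, hc⟩ : ∃ c, ¬ (σ c ∈ A ↔ e c ∈ S) := by
      by_contra! hS
      exact hST (by ext c; obtain ⟨c, rfl⟩ := e.surjective c; rw [mem_T, hS])
    exact prod_eq_zero (mem_univ c) (by simp [hc])

/-- Laplace expansion along two blocks of rows. Indexing it by equivalences rather than by sets of
columns leaves the order of the columns within each minor free. -/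
theorem det_eq_finsum_sign_mul_det_toBlocks {ι : Type*} (M : Matrix (α ⊕ β) n R)
    (e₀ : α ⊕ β ≃ n) (e : ι → (α ⊕ β ≃ n))
    (he : ∀ S : Finset n, #S = Fintype.card α → ∃! t, Set.range (e t ∘ Sum.inl) = S) :
    (M.submatrix id e₀).det = ∑ᶠ t, (Equiv.Perm.sign (e₀.symm.trans (e t)) : ℤ) *
      (M.submatrix id (e t)).toBlocks₁₁.det * (M.submatrix id (e t)).toBlocks₂₂.det := by
  set A : Finset (α ⊕ β) := univ.map .inl
  set col : ι → Finset n := fun t => univ.map (Function.Embedding.inl.trans (e t).toEmbedding)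
  have coe_col (t : ι) : Set.range (e t ∘ Sum.inl) = col t := by simp [col, Function.comp_def]
  have bijOn_col : Set.BijOn col Set.univ (powersetCard #A (univ : Finset n)) := by
    refine ⟨fun t _ => by simp [col, A, mem_powersetCard], fun t _ t' _ h => ?_, fun S hS => ?_⟩
    · exact (he (col t) (by simp [col])).unique (coe_col t) (by rw [coe_col, h])
    · obtain ⟨t, ht, -⟩ := he S (by simpa [A, mem_powersetCard] using hS)
      exact ⟨t, trivial, coe_injective (by rw [← coe_col, ht])⟩
  rw [det_eq_sum_powersetCard_det_ite M e₀ A, ← finsum_mem_coe_finset]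
  refine ((finsum_mem_univ _).symm.trans (finsum_mem_eq_of_bijOn col bijOn_col fun t _ => ?_)).symm
  rw [det_submatrix_id_equiv _ e₀ (e t), det_ite_mem_range_inl M (e t) (coe_col t), mul_assoc]

theorem sign_eq_prod_of_strictMono {r m : ℕ} (σ : Equiv.Perm (Fin (r + m)))
    (hleft : StrictMono (σ ∘ Fin.castAdd m)) (hright : StrictMono (σ ∘ Fin.natAdd r)) :
    Equiv.Perm.sign σ =
      ∏ i : Fin r, ∏ j : Fin m, if σ (.natAdd r j) < σ (.castAdd m i) then -1 else 1 := by
  have hinv (a : Fin (r + m)) : ∏ b ∈ Ioi a, (if σ a < σ b then (1 : ℤˣ) else -1) =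
      ∏ b, if a < b ∧ σ b < σ a then -1 else 1 := by
    refine prod_subset_one_on_sdiff (subset_univ _) (fun b hb => if_neg fun h => ?_) fun b hb => ?_
    · simp [h.1] at hb
    have hab := mem_Ioi.1 hb
    rcases (σ.injective.ne hab.ne).lt_or_gt with h | h <;> simp [hab, h, h.not_gt]
  have hleft' (i j : Fin r) :
      ¬ (Fin.castAdd m i < .castAdd m j ∧ σ (.castAdd m j) < σ (.castAdd m i)) :=
    fun h => h.2.not_gt (hleft h.1)
  have hright' (i j : Fin m) :
      ¬ (Fin.natAdd r i < .natAdd r j ∧ σ (.natAdd r j) < σ (.natAdd r i)) :=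
    fun h => h.2.not_gt (hright (by simpa using h.1))
  have hlr (i : Fin r) (j : Fin m) : Fin.castAdd m i < .natAdd r j :=
    Fin.lt_def.2 (i.2.trans_le (Nat.le_add_right r j))
  rw [Equiv.Perm.sign_eq_prod_prod_Ioi, prod_congr rfl fun a _ => hinv a]
  simp only [Fin.prod_univ_add, hleft', hright', hlr, (hlr _ _).not_gt, if_false, true_and,
    false_and, prod_const_one, one_mul, mul_one]

end Determinants

section JacobiTrudi

open Finset Matrix

variable {R : Type*} [CommRing R] {h : ℤ → R} {l t : ℕ → ℕ} {d : ℕ}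

/-- The Jacobi–Trudi determinant of size `d` of the skew shape `l / t`, for an arbitrary sequence
`h` in place of the complete homogeneous symmetric functions. -/
def jacobiTrudi (h : ℤ → R) (l t : ℕ → ℕ) (d : ℕ) : R :=
  Matrix.det (of fun i j : Fin d => h ((l i : ℤ) - t j - (i : ℕ) + (j : ℕ)))

theorem jacobiTrudi_zero_zero (hneg : ∀ k < 0, h k = 0) (hzero : h 0 = 1) :
    jacobiTrudi h 0 0 d = 1 := by
  rw [jacobiTrudi, det_of_isUpperTriangular]
  · simp [hzero]
  · intro i j (hij : j < i)
    exact hneg _ (by simpa using hij)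

theorem jacobiTrudi_eq_of_le (hneg : ∀ k < 0, h k = 0) (hzero : h 0 = 1) {e : ℕ} (hde : d ≤ e)
    (hl : ∀ k, d ≤ k → l k = 0) (ht : ∀ k, d ≤ k → t k = 0) :
    jacobiTrudi h l t e = jacobiTrudi h l t d := by
  obtain ⟨c, rfl⟩ := Nat.exists_eq_add_of_le hde
  rw [← mul_one (jacobiTrudi h l t d), ← jacobiTrudi_zero_zero hneg hzero (d := c)]
  simp only [jacobiTrudi]
  rw [← det_submatrix_equiv_self finSumFinEquiv, ← det_fromBlocks_zero₂₁ _
    (of fun (i : Fin d) (j : Fin c) => h ((l i : ℤ) - t (d + j) - (i : ℕ) + (d + j : ℕ)))]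
  congr 1
  ext (i | i) (j | j)
  · simp
  · simp
  · suffices h ((l (d + i) : ℤ) - t j - (d + i : ℕ) + (j : ℕ)) = 0 by simpa using this
    exact hneg _ (by rw [hl _ (by omega)]; omega)
  · simp [hl, ht]

theorem jacobiTrudi_eq_zero (hneg : ∀ k < 0, h k = 0) (hl : Antitone l) (ht : Antitone t) {k : ℕ}
    (hk : k < d) (hlt : l k < t k) : jacobiTrudi h l t d = 0 := by
  refine det_eq_zero_of_card_lt_card_add_card _ (s := Ici ⟨k, hk⟩) (t := Iic ⟨k, hk⟩)
    (fun i hi j hj => hneg _ ?_) (by rw [Fintype.card_fin, Fin.card_Ici, Fin.card_Iic]; omega)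
  rw [mem_Ici, Fin.le_def] at hi
  rw [mem_Iic, Fin.le_def] at hj
  have hli := hl hi
  have htj := ht hj
  simp only at hi hj hli htj
  omega

end JacobiTrudi

section CompleteHomogeneous

open Finset Matrix

variable {R : Type*} [CommRing R] {d : ℕ}

theorem hEval_of_neg (x : Fin d → R) {k : ℤ} (hk : k < 0) : hEval x k = 0 := by
  simp [hEval, hk]

theorem hEval_zero (x : Fin d → R) : hEval x 0 = 1 := by
  simp [hEval]

theorem mk_hEval_eq_prod (x : Fin d → R) :
    PowerSeries.mk (fun k : ℕ => hEval x k) = ∏ i, PowerSeries.mk (fun k : ℕ => x i ^ k) := by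
  ext k
  simp only [PowerSeries.coeff_prod, PowerSeries.coeff_mk, hEval, Nat.cast_nonneg, if_true,
    Int.toNat_natCast, MvPolynomial.hsymm, map_sum]
  refine sum_bij' (fun s _ => Multiset.toFinsupp (s : Multiset (Fin d)))
    (fun e he => ⟨Finsupp.toMultiset e, ?_⟩) (fun s _ => ?_) (fun _ _ => mem_univ _)
    (fun s _ => Subtype.ext (by simp)) (fun e _ => by simp) (fun s _ => ?_)
  · rw [Finsupp.card_toMultiset, Finsupp.sum_fintype _ _ (by simp)]
    simpa using (mem_finsuppAntidiag.1 he).1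
  · simp only [mem_finsuppAntidiag, subset_univ, and_true]
    exact (Multiset.sum_count_eq_card fun i _ => mem_univ i).trans s.2
  · rw [prod_multiset_map_count, map_prod, prod_subset (subset_univ _)]
    · simp
    · intro i _ hi
      rw [Multiset.mem_toFinset, ← Multiset.count_eq_zero] at hi
      rw [hi, pow_zero, map_one]

theorem mk_pow_mul_one_sub_C_mul_X (a : R) :
    PowerSeries.mk (fun k : ℕ => a ^ k) * (1 - PowerSeries.C a * PowerSeries.X) = 1 := by
  have h := congrArg (PowerSeries.rescale a) (PowerSeries.mk_one_mul_one_sub_eq_one R)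
  simpa [PowerSeries.rescale_mk, PowerSeries.rescale_X] using h

theorem mk_hEval_mul_prod_erase (x : Fin d → R) (i : Fin d) :
    PowerSeries.mk (fun k : ℕ => hEval x k) *
        ∏ j ∈ univ.erase i, (1 - PowerSeries.C (x j) * PowerSeries.X) =
      PowerSeries.mk (fun k : ℕ => x i ^ k) := by
  rw [mk_hEval_eq_prod, ← mul_prod_erase univ _ (mem_univ i), mul_assoc, ← prod_mul_distrib]
  simp [mk_pow_mul_one_sub_C_mul_X]

theorem coeff_mk_mul_coe_eq_sum {h : ℤ → R} (hneg : ∀ k < 0, h k = 0) {p : Polynomial R}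
    (hp : p.natDegree < d) (k : ℕ) :
    PowerSeries.coeff k (PowerSeries.mk (fun k : ℕ => h k) * (p : PowerSeries R)) =
      ∑ c : Fin d, h ((k : ℤ) - (c : ℕ)) * p.coeff c := by
  rw [mul_comm, PowerSeries.coeff_mul, Nat.sum_antidiagonal_eq_sum_range_succ_mk,
    Fin.sum_univ_eq_sum_range (fun c => h ((k : ℤ) - (c : ℕ)) * p.coeff c) d]
  have hlarge (c : ℕ) (hc : c ∉ range d) : p.coeff c = 0 :=
    Polynomial.coeff_eq_zero_of_natDegree_lt (hp.trans_le (by simpa using hc))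
  have hpast (c : ℕ) (hc : c ∉ range (k + 1)) : h ((k : ℤ) - (c : ℕ)) = 0 :=
    hneg _ (by rw [mem_range] at hc; omega)
  rw [sum_subset (range_subset_range.2 (le_max_left d (k + 1))) fun c _ hc => by
      rw [hlarge c hc, mul_zero],
    ← sum_subset (range_subset_range.2 (le_max_right d (k + 1))) fun c _ hc => by
      rw [hpast c hc, zero_mul]]
  refine sum_congr rfl fun c hc => ?_
  have hck : c ≤ k := by simpa [Nat.lt_succ_iff] using hc
  simp [mul_comm, Nat.cast_sub hck]

open Polynomial in
theorem natDegree_prod_one_sub_C_mul_X_le {ι : Type*} (s : Finset ι) (x : ι → R) :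
    (∏ j ∈ s, (1 - C (x j) * X)).natDegree ≤ #s := by
  refine (natDegree_prod_le _ _).trans ((sum_le_card_nsmul _ _ 1 fun j _ => ?_).trans (by simp))
  compute_degree

open Polynomial in
theorem reflect_prod_one_sub_C_mul_X {ι : Type*} (s : Finset ι) (x : ι → R) :
    reflect #s (∏ j ∈ s, (1 - C (x j) * X)) = ∏ j ∈ s, (X - C (x j)) := by
  classical
  induction s using Finset.induction_on with
  | empty => simp
  | insert a s ha ih =>
    rw [prod_insert ha, prod_insert ha, card_insert_of_notMem ha, add_comm,
      reflect_mul _ _ (by compute_degree) (natDegree_prod_one_sub_C_mul_X_le _ _), ih,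
      reflect_sub, ← C_1, reflect_C, reflect_C_mul]
    simp

/-- The matrix whose `i`-th column lists the coefficients of `∏_{j ≠ i} (1 - x_j t)`. It turns
each row of a matrix of complete homogeneous polynomials into a row of powers of the `x_i`. -/
noncomputable def coeffMatrix (x : Fin d → R) : Matrix (Fin d) (Fin d) R :=
  of fun c i => (∏ j ∈ univ.erase i, (1 - Polynomial.C (x j) * Polynomial.X)).coeff c

theorem sum_hEval_mul_coeffMatrix (x : Fin d → R) (i : Fin d) (k : ℕ) :
    ∑ c : Fin d, hEval x ((k : ℤ) - (c : ℕ)) * coeffMatrix x c i = x i ^ k := by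
  set p : Polynomial R := ∏ j ∈ univ.erase i, (1 - Polynomial.C (x j) * Polynomial.X) with hp
  have hcoe : (p : PowerSeries R) =
      ∏ j ∈ univ.erase i, (1 - PowerSeries.C (x j) * PowerSeries.X) := by
    rw [hp, ← Polynomial.coeToPowerSeries.ringHom_apply, map_prod]
    simp
  have hdeg : p.natDegree < d := (natDegree_prod_one_sub_C_mul_X_le _ x).trans_lt <| by
    simpa using i.pos
  have h := congrArg (PowerSeries.coeff k) (mk_hEval_mul_prod_erase x i)
  rw [← hcoe, coeff_mk_mul_coe_eq_sum (fun _ => hEval_of_neg x) hdeg, PowerSeries.coeff_mk] at h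
  exact h

open Polynomial in
theorem coeffMatrix_rev (x : Fin d → Rˣ) (c i : Fin d) :
    coeffMatrix (fun j => (x j : R)) c.rev i =
      (∏ j ∈ univ.erase i, -(x j : R)) * coeffMatrix (fun j => (↑(x j)⁻¹ : R)) c i := by
  have hfactor (j : Fin d) :
      (1 - C (x j : R) * X) = C (-(x j : R)) * (X - C (↑(x j)⁻¹ : R)) := by
    rw [mul_sub, ← C_mul, neg_mul, Units.mul_inv]
    simp only [map_neg, map_one]
    ring
  have hcard : #(univ.erase i) = d - 1 := by simp
  have hrev : revAt (d - 1) c.rev = c := by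
    rw [revAt_le (by rw [Fin.val_rev]; omega), Fin.val_rev]
    omega
  simp only [coeffMatrix, of_apply, hfactor]
  rw [prod_mul_distrib, ← map_prod, coeff_C_mul, ← reflect_prod_one_sub_C_mul_X, coeff_reflect,
    hcard, hrev]

theorem sum_hEval_inv_mul_coeffMatrix (x : Fin d → Rˣ) (i : Fin d) (k : ℕ) :
    (x i : R) ^ (k + 1) * ∑ c : Fin d, hEval (fun j => (↑(x j)⁻¹ : R))
        ((k : ℤ) - d + 1 + (c : ℕ)) * coeffMatrix (fun j => (x j : R)) c i =
      (-1) ^ (d - 1) * ∏ j, (x j : R) := by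
  have hsum : ∑ c : Fin d, hEval (fun j => (↑(x j)⁻¹ : R))
        ((k : ℤ) - d + 1 + (c : ℕ)) * coeffMatrix (fun j => (x j : R)) c i =
      (∏ j ∈ univ.erase i, -(x j : R)) * (↑(x i)⁻¹ : R) ^ k := by
    rw [← sum_hEval_mul_coeffMatrix (fun j => (↑(x j)⁻¹ : R)) i k, mul_sum,
      ← Equiv.sum_comp Fin.revPerm]
    refine sum_congr rfl fun c _ => ?_
    rw [Fin.revPerm_apply, coeffMatrix_rev, mul_left_comm,
      show (k : ℤ) - d + 1 + (c.rev : ℕ) = k - (c : ℕ) by rw [Fin.val_rev]; omega]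
  rw [hsum, pow_succ', mul_mul_mul_comm, ← mul_pow, Units.mul_inv, one_pow, mul_one, prod_neg,
    mul_left_comm, mul_prod_erase univ (fun j => (x j : R)) (mem_univ i)]
  simp

end CompleteHomogeneous

section Partitions

open Finset

namespace NatPartition

theorem lt_conjugatePart_iff (τ : NatPartition) (i j : ℕ) :
    j < conjugatePart τ.parts (i + 1) ↔ i < τ.parts j := by
  have hex : ∃ k, τ.parts k < i + 1 := by
    obtain ⟨k, hk⟩ := τ.eventually_zero
    exact ⟨k, by simp [hk k le_rfl]⟩
  have hset : {j : ℕ | i + 1 ≤ τ.parts j} = Set.Iio (Nat.find hex) := by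
    ext j
    simp only [Set.mem_ofPred_eq, Set.mem_Iio, Nat.lt_find_iff, not_lt]
    exact ⟨fun h k hk => h.trans (τ.antitone hk), fun h => h j le_rfl⟩
  have hj : j ∈ {j : ℕ | i + 1 ≤ τ.parts j} ↔ i < τ.parts j := Iff.rfl
  rw [conjugatePart, ← hj, hset, ← Finset.coe_Iio, Set.ncard_coe_finset]
  simp

theorem antitone_conjugatePart (τ : NatPartition) :
    Antitone fun i => conjugatePart τ.parts (i + 1) := by
  refine antitone_nat_of_succ_le fun i => le_of_forall_lt fun j hj => ?_
  rw [lt_conjugatePart_iff] at hj ⊢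
  omega

theorem conjugatePart_eq_zero (τ : NatPartition) {i : ℕ} (hi : τ.parts 0 ≤ i) :
    conjugatePart τ.parts (i + 1) = 0 := by
  by_contra h
  have := (τ.lt_conjugatePart_iff i 0).1 (by omega)
  omega

theorem lt_length_iff (τ : NatPartition) (j : ℕ) : j < τ.length ↔ τ.parts j ≠ 0 := by
  have h : τ.length = conjugatePart τ.parts (0 + 1) := by
    simp [length, conjugatePart, Nat.one_le_iff_ne_zero]
  rw [h, lt_conjugatePart_iff, Nat.pos_iff_ne_zero]

theorem size_eq_sum {τ : NatPartition} {r : ℕ} (hτ : ∀ j, r ≤ j → τ.parts j = 0) :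
    τ.size = ∑ j : Fin r, τ.parts j := by
  rw [size, Fin.sum_univ_eq_sum_range τ.parts r]
  refine finsum_eq_sum_of_support_subset _ fun j hj => ?_
  by_contra hcon
  exact hj (hτ j (by simpa using hcon))

/-- The partitions whose diagram fits in a box with `r` rows and `m` columns. -/
def box (r m : ℕ) : Set NatPartition := {τ | (∀ j, r ≤ j → τ.parts j = 0) ∧ τ.parts 0 ≤ m}

variable {r m : ℕ}

theorem parts_le (τ : box r m) (j : ℕ) : τ.1.parts j ≤ m :=
  (τ.1.antitone (Nat.zero_le j)).trans τ.2.2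

theorem conjugatePart_le (τ : box r m) (i : ℕ) : conjugatePart τ.1.parts (i + 1) ≤ r := by
  by_contra! h
  rw [lt_conjugatePart_iff, τ.2.1 r le_rfl] at h
  omega

theorem strictAnti_parts_add_rev (τ : NatPartition) :
    StrictAnti fun i : Fin r => τ.parts i + (i.rev : ℕ) := by
  intro i j hij
  have h := τ.antitone (show (i : ℕ) ≤ j from hij.le)
  simp only [Fin.val_rev]
  omega

/-- The steps of the lattice path bounding the diagram of `τ` in an `r × m` box, numbered from the
bottom left: `Sum.inl i` is the vertical step at the end of row `i`, and `Sum.inr j` the horizontal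
step at the bottom of column `j`. -/
noncomputable def edgeStep (τ : box r m) : Fin r ⊕ Fin m → Fin (r + m) :=
  Sum.elim (fun i => ⟨τ.1.parts i + i.rev, by have := parts_le τ i; omega⟩)
    (fun j => ⟨r + j - conjugatePart τ.1.parts (j + 1), by omega⟩)

theorem val_edgeStep_inl (τ : box r m) (i : Fin r) :
    (edgeStep τ (.inl i) : ℕ) = τ.1.parts i + i.rev := rfl

theorem val_edgeStep_inr (τ : box r m) (j : Fin m) :
    (edgeStep τ (.inr j) : ℕ) = r + j - conjugatePart τ.1.parts (j + 1) := rfl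

theorem edgeStep_inr_lt_inl_iff (τ : box r m) (i : Fin r) (j : Fin m) :
    edgeStep τ (.inr j) < edgeStep τ (.inl i) ↔ (j : ℕ) < τ.1.parts i := by
  have h := τ.1.lt_conjugatePart_iff j i
  have hle := conjugatePart_le τ j
  rw [Fin.lt_def, val_edgeStep_inl, val_edgeStep_inr, Fin.val_rev]
  omega

theorem edgeStep_inl_ne_inr (τ : box r m) (i : Fin r) (j : Fin m) :
    edgeStep τ (.inl i) ≠ edgeStep τ (.inr j) := by
  have h := τ.1.lt_conjugatePart_iff j i
  have hle := conjugatePart_le τ j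
  rw [Ne, Fin.ext_iff, val_edgeStep_inl, val_edgeStep_inr, Fin.val_rev]
  omega

theorem strictAnti_edgeStep_inl (τ : box r m) : StrictAnti (edgeStep τ ∘ Sum.inl) :=
  fun _ _ hij => τ.1.strictAnti_parts_add_rev hij

theorem strictMono_edgeStep_inr (τ : box r m) : StrictMono (edgeStep τ ∘ Sum.inr) := by
  intro i j hij
  have h : conjugatePart τ.1.parts (j + 1) ≤ conjugatePart τ.1.parts (i + 1) :=
    τ.1.antitone_conjugatePart hij.le
  have hle := conjugatePart_le τ i
  simp only [Function.comp_apply, Fin.lt_def, val_edgeStep_inr]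
  omega

theorem injective_edgeStep (τ : box r m) : Function.Injective (edgeStep τ) := by
  rw [← Sum.elim_comp_inl_inr (edgeStep τ)]
  exact (strictAnti_edgeStep_inl τ).injective.sumElim (strictMono_edgeStep_inr τ).injective
    (edgeStep_inl_ne_inr τ)

/-- `edgeStep` as an equivalence: every step of the path is either vertical or horizontal. -/
noncomputable def edgeEquiv (τ : box r m) : Fin r ⊕ Fin m ≃ Fin (r + m) :=
  Equiv.ofBijective (edgeStep τ) <|
    (Fintype.bijective_iff_injective_and_card _).2 ⟨injective_edgeStep τ, by simp⟩

@[simp]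
theorem coe_edgeEquiv (τ : box r m) : ⇑(edgeEquiv τ) = edgeStep τ := rfl

/-- `edgeEquiv` of the empty partition. -/
def emptyEdgeEquiv (r m : ℕ) : Fin r ⊕ Fin m ≃ Fin (r + m) :=
  (Equiv.sumCongr Fin.revPerm (Equiv.refl _)).trans finSumFinEquiv

theorem sign_edgeEquiv (τ : box r m) :
    Equiv.Perm.sign ((emptyEdgeEquiv r m).symm.trans (edgeEquiv τ)) = (-1) ^ τ.1.size := by
  have hleft (i : Fin r) : (emptyEdgeEquiv r m).symm.trans (edgeEquiv τ) (.castAdd m i) =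
      edgeStep τ (.inl i.rev) := by simp [emptyEdgeEquiv]
  have hright (j : Fin m) : (emptyEdgeEquiv r m).symm.trans (edgeEquiv τ) (.natAdd r j) =
      edgeStep τ (.inr j) := by simp [emptyEdgeEquiv]
  have hrow (i : Fin r) : ∏ j : Fin m, (if (j : ℕ) < τ.1.parts i then (-1 : ℤˣ) else 1) =
      (-1) ^ τ.1.parts i := by
    rw [prod_ite, prod_const_one, mul_one, prod_const, Fin.card_filter_val_lt,
      min_eq_right (parts_le τ i)]
  rw [sign_eq_prod_of_strictMono _
    (fun i j hij => by
      simpa only [Function.comp_apply, hleft] using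
        strictAnti_edgeStep_inl τ (Fin.rev_lt_rev.2 hij))
    (fun i j hij => by
      simpa only [Function.comp_apply, hright] using strictMono_edgeStep_inr τ hij)]
  simp only [hleft, hright, edgeStep_inr_lt_inl_iff, hrow]
  rw [size_eq_sum τ.2.1, ← prod_pow_eq_pow_sum, ← Equiv.prod_comp Fin.revPerm]
  simp

theorem rev_le_of_strictAnti {f : Fin r → ℕ} (hf : StrictAnti f) (i : Fin r) :
    (i.rev : ℕ) ≤ f i := by
  have h := card_le_card_of_injOn (s := Ioi i) (t := range (f i)) f
    (fun j hj => by simpa using hf (mem_Ioi.1 hj)) hf.injective.injOn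
  rw [Fin.card_Ioi, card_range] at h
  rw [Fin.val_rev]
  omega

/-- The partition `(f i - i.rev)_i` whose edge path in a box with `r` rows has vertical steps at
the values of `f`. -/
def ofStrictAnti (f : Fin r → ℕ) (hf : StrictAnti f) : NatPartition where
  parts j := if hj : j < r then f ⟨j, hj⟩ - (Fin.rev ⟨j, hj⟩ : ℕ) else 0
  antitone := by
    refine antitone_nat_of_succ_le fun j => ?_
    by_cases hj : j + 1 < r
    · have h : f ⟨j + 1, hj⟩ < f ⟨j, by omega⟩ := hf (by simp [Fin.lt_def])
      simp only [hj, show j < r by omega, dite_true, Fin.val_rev]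
      omega
    · simp [hj]
  eventually_zero := ⟨r, fun j hj => by simp [hj.not_gt]⟩

theorem ofStrictAnti_parts_add_rev {f : Fin r → ℕ} (hf : StrictAnti f) (i : Fin r) :
    (ofStrictAnti f hf).parts i + (i.rev : ℕ) = f i := by
  simpa [ofStrictAnti] using Nat.sub_add_cancel (rev_le_of_strictAnti hf i)

theorem ofStrictAnti_mem_box {f : Fin r → Fin (r + m)} (hf : StrictAnti fun i => (f i : ℕ)) :
    ofStrictAnti (fun i => (f i : ℕ)) hf ∈ box r m := by
  refine ⟨fun j hj => by simp [ofStrictAnti, hj.not_gt], ?_⟩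
  by_cases h0 : 0 < r
  · have h := ofStrictAnti_parts_add_rev hf ⟨0, h0⟩
    rw [Fin.val_rev] at h
    simp only at h
    omega
  · simp [ofStrictAnti, h0]

theorem edgeStep_inl_injective :
    Function.Injective fun τ : box r m => edgeStep τ ∘ Sum.inl := by
  rintro ⟨⟨p, _, _⟩, hp, _⟩ ⟨⟨p', _, _⟩, hp', _⟩ h
  congr
  funext j
  by_cases hj : j < r
  · simpa [Fin.ext_iff, val_edgeStep_inl] using congrFun h ⟨j, hj⟩
  · exact (hp j (by omega)).trans (hp' j (by omega)).symm

theorem existsUnique_range_edgeEquiv_inl {S : Finset (Fin (r + m))} (hS : #S = r) :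
    ∃! τ : box r m, Set.range (edgeEquiv τ ∘ Sum.inl) = S := by
  set f : Fin r → Fin (r + m) := S.orderEmbOfFin hS ∘ Fin.rev with hf
  have hanti : StrictAnti f := (S.orderEmbOfFin hS).strictMono.comp_strictAnti Fin.rev_strictAnti
  have hrange : Set.range f = S := by
    rw [hf, Fin.rev_surjective.range_comp, range_orderEmbOfFin]
  have hval : StrictAnti fun i => (f i : ℕ) := hanti
  have hstep : edgeStep ⟨_, ofStrictAnti_mem_box hval⟩ ∘ Sum.inl = f :=
    funext fun i => Fin.ext (ofStrictAnti_parts_add_rev hval i)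
  refine ⟨_, (congrArg Set.range hstep).trans hrange, fun τ hτ => edgeStep_inl_injective ?_⟩
  exact (((strictAnti_edgeStep_inl τ).range_inj hanti).1 (hτ.trans hrange.symm)).trans hstep.symm

end NatPartition

end Partitions

section Composite

open Finset Matrix

variable {R : Type*} [CommRing R]

/-- The matrix of the composite Jacobi–Trudi determinant: its first `r` rows are those of the
Jacobi–Trudi matrix of `l` in terms of `h`, its last `m` rows those of `u` in terms of `g`. The
indices of `h` decrease along a row and those of `g` increase. -/
def compositeMatrix (h g : ℤ → R) (r m : ℕ) (l u : ℕ → ℕ) :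
    Matrix (Fin r ⊕ Fin m) (Fin (r + m)) R :=
  fromRows (of fun i c => h ((l i : ℤ) - (i : ℕ) + (r - 1 - (c : ℕ))))
    (of fun j c => g ((u j : ℤ) - (j : ℕ) + ((c : ℕ) - r)))

/-- The composite Jacobi–Trudi determinant. The columns are listed in the order for which it is
`1` when both partitions are empty. -/
def compositeDet (h g : ℤ → R) (r m : ℕ) (l u : ℕ → ℕ) : R :=
  ((compositeMatrix h g r m l u).submatrix id (NatPartition.emptyEdgeEquiv r m)).det

variable {h g : ℤ → R} {r m : ℕ} {l u : ℕ → ℕ}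

theorem det_toBlocks₁₁_compositeMatrix (τ : NatPartition.box r m) :
    ((compositeMatrix h g r m l u).submatrix id (NatPartition.edgeEquiv τ)).toBlocks₁₁.det =
      jacobiTrudi h l τ.1.parts r := by
  congr 1
  ext i j
  suffices h ((l i : ℤ) - (i : ℕ) + (r - 1 - (τ.1.parts j + (j.rev : ℕ) : ℕ))) =
      h ((l i : ℤ) - τ.1.parts j - (i : ℕ) + (j : ℕ)) from this
  congr 1
  rw [Fin.val_rev]
  omega

theorem det_toBlocks₂₂_compositeMatrix (τ : NatPartition.box r m) :
    ((compositeMatrix h g r m l u).submatrix id (NatPartition.edgeEquiv τ)).toBlocks₂₂.det =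
      jacobiTrudi g u (fun j => conjugatePart τ.1.parts (j + 1)) m := by
  congr 1
  ext i j
  suffices g ((u i : ℤ) - (i : ℕ) + ((r + j - conjugatePart τ.1.parts (j + 1) : ℕ) - r)) =
      g ((u i : ℤ) - conjugatePart τ.1.parts (j + 1) - (i : ℕ) + (j : ℕ)) from this
  have hle := NatPartition.conjugatePart_le τ j
  congr 1
  omega

theorem compositeDet_eq_finsum_mem :
    compositeDet h g r m l u =
      ∑ᶠ τ ∈ NatPartition.box r m, (-1 : R) ^ τ.size * jacobiTrudi h l τ.parts r *
        jacobiTrudi g u (fun j => conjugatePart τ.parts (j + 1)) m := by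
  have hrange (S : Finset (Fin (r + m))) (hS : #S = Fintype.card (Fin r)) :=
    NatPartition.existsUnique_range_edgeEquiv_inl (hS.trans (Fintype.card_fin r))
  rw [← finsum_set_coe_eq_finsum_mem, compositeDet,
    det_eq_finsum_sign_mul_det_toBlocks _ _ NatPartition.edgeEquiv hrange]
  refine finsum_congr fun τ => ?_
  rw [NatPartition.sign_edgeEquiv, det_toBlocks₁₁_compositeMatrix, det_toBlocks₂₂_compositeMatrix]
  simp

theorem compositeDet_eq_finsum (hneg : ∀ k < 0, h k = 0) (hzero : h 0 = 1)
    (gneg : ∀ k < 0, g k = 0) (gzero : g 0 = 1) {s : ℕ} (hl : Antitone l) (hu : Antitone u)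
    (hlr : ∀ j, r ≤ j → l j = 0) (hus : ∀ j, s ≤ j → u j = 0) (hsm : s ≤ m) :
    compositeDet h g r m l u =
      ∑ᶠ τ : NatPartition, (-1 : R) ^ τ.size * jacobiTrudi h l τ.parts (r + τ.length) *
        jacobiTrudi g u (fun j => conjugatePart τ.parts (j + 1)) (s + τ.parts 0) := by
  rw [compositeDet_eq_finsum_mem, finsum_mem_def]
  refine finsum_congr fun τ => ?_
  by_cases hr : τ.parts r = 0
  · have hτr (j : ℕ) (hj : r ≤ j) : τ.parts j = 0 := Nat.le_zero.1 (hr ▸ τ.antitone hj)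
    have hstab {e : ℕ} (he : max s (τ.parts 0) ≤ e) := jacobiTrudi_eq_of_le gneg gzero he
      (fun k hk => hus k (le_trans (le_max_left _ _) hk))
      (fun k hk => τ.conjugatePart_eq_zero (le_trans (le_max_right _ _) hk))
    rw [jacobiTrudi_eq_of_le hneg hzero (Nat.le_add_right r τ.length) hlr hτr,
      hstab (e := s + τ.parts 0) (by omega)]
    by_cases hm : τ.parts 0 ≤ m
    · have hbox : τ ∈ NatPartition.box r m := ⟨hτr, hm⟩
      rw [Set.indicator_of_mem hbox, hstab (e := m) (by omega)]
    · have hlt : u s < conjugatePart τ.parts (s + 1) := by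
        rw [hus s le_rfl, τ.lt_conjugatePart_iff]
        omega
      rw [Set.indicator_of_notMem fun h => hm h.2, jacobiTrudi_eq_zero gneg hu
        τ.antitone_conjugatePart (by omega) hlt, mul_zero]
  · have hlen := (τ.lt_length_iff r).2 hr
    have hlt : l r < τ.parts r := by
      rw [hlr r le_rfl]
      omega
    rw [Set.indicator_of_notMem fun h => hr (h.1 r le_rfl),
      jacobiTrudi_eq_zero hneg hl τ.antitone (by omega) hlt, mul_zero, zero_mul]

theorem compositeDet_zero_zero (hneg : ∀ k < 0, h k = 0) (hzero : h 0 = 1)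
    (gneg : ∀ k < 0, g k = 0) (gzero : g 0 = 1) : compositeDet h g r m 0 0 = 1 := by
  set M := (compositeMatrix h g r m 0 0).submatrix id (NatPartition.emptyEdgeEquiv r m) with hM
  have h₁₁ : M.toBlocks₁₁.det = 1 := by
    rw [← jacobiTrudi_zero_zero hneg hzero (d := r)]
    congr 1
    ext i j
    simp [hM, toBlocks₁₁, compositeMatrix, NatPartition.emptyEdgeEquiv]
  have h₂₂ : M.toBlocks₂₂.det = 1 := by
    rw [← jacobiTrudi_zero_zero gneg gzero (d := m)]
    congr 1
    ext i j
    simp [hM, toBlocks₂₂, compositeMatrix, NatPartition.emptyEdgeEquiv]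
  have h₂₁ : M.toBlocks₂₁ = 0 := by
    ext i j
    suffices (0 : ℤ) - (i : ℕ) + ((j.rev : ℕ) - r) < 0 from gneg _ this
    omega
  rw [compositeDet, ← hM, ← fromBlocks_toBlocks M, h₂₁, det_fromBlocks_zero₂₁, h₁₁, h₂₂, one_mul]

theorem compositeMatrix_mul_coeffMatrix_inl (x : Fin (r + m) → R) (i : Fin r) (t : Fin (r + m)) :
    (compositeMatrix (hEval x) g r m l u * coeffMatrix x) (.inl i) t = x t ^ (l i + i.rev) := by
  rw [← sum_hEval_mul_coeffMatrix x t, mul_apply]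
  refine sum_congr rfl fun c _ => ?_
  congr 1
  suffices hEval x ((l i : ℤ) - (i : ℕ) + (r - 1 - (c : ℕ))) =
    hEval x ((l i + (i.rev : ℕ) : ℕ) - (c : ℕ)) from this
  rw [Fin.val_rev]
  congr 1
  omega

theorem pow_mul_compositeMatrix_mul_coeffMatrix_inr (x : Fin (r + m) → Rˣ) (j : Fin m)
    (t : Fin (r + m)) :
    (x t : R) ^ (u j + j.rev + 1) * (compositeMatrix h (hEval fun i => (↑(x i)⁻¹ : R)) r m l u *
        coeffMatrix fun i => (x i : R)) (.inr j) t =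
      (-1) ^ (r + m - 1) * ∏ i, (x i : R) := by
  rw [← sum_hEval_inv_mul_coeffMatrix x t, mul_apply]
  congr 1
  refine sum_congr rfl fun c _ => ?_
  congr 1
  suffices hEval (fun i => (↑(x i)⁻¹ : R)) ((u j : ℤ) - (j : ℕ) + ((c : ℕ) - r)) =
    hEval (fun i => (↑(x i)⁻¹ : R)) ((u j + (j.rev : ℕ) : ℕ) - (r + m : ℕ) + 1 + (c : ℕ)) from this
  rw [Fin.val_rev]
  congr 1
  omega

/-- The alternant `det (x_i ^ (ρ_j + n - j))` of `n` elements, the numerator of the bialternant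
formula for the Schur function of `ρ`. -/
def alternant {n : ℕ} (x : Fin n → R) (rho : ℕ → ℕ) : R :=
  Matrix.det (of fun i j : Fin n => x i ^ (rho j + (n - 1 - (j : ℕ))))

theorem alternant_zero {n : ℕ} (x : Fin n → R) :
    alternant x 0 = Matrix.det (of fun i j : Fin n => x i ^ (n - 1 - (j : ℕ))) := by
  simp [alternant]

theorem alternant_zero_ne_zero [IsDomain R] {n : ℕ} {x : Fin n → R} (hx : Function.Injective x) :
    alternant x 0 ≠ 0 := by
  have hproj : alternant x 0 = (projVandermonde 1 x).det := by
    rw [alternant_zero]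
    congr 1
    ext i j
    simp [projVandermonde_apply, Fin.val_rev, Nat.sub_sub, add_comm]
  rw [hproj, det_projVandermonde]
  refine prod_ne_zero_iff.2 fun i _ => prod_ne_zero_iff.2 fun j hj => ?_
  simpa [sub_eq_zero] using hx.ne (mem_Ioi.1 hj).ne

/-- The column of the alternant corresponding to each row of the composite matrix: the rows of the
second block come in reverse order. -/
def alternantColumn (r m : ℕ) : Fin r ⊕ Fin m ≃ Fin (r + m) :=
  (Equiv.sumCongr (Equiv.refl _) Fin.revPerm).trans finSumFinEquiv

theorem pow_mul_compositeMatrix_mul_coeffMatrix {q : ℕ} {rho : ℕ → ℕ} (x : Fin (r + m) → Rˣ)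
    (hleft : ∀ i < r, rho i = l i + q) (hright : ∀ j < m, rho (r + m - 1 - j) + u j = q)
    (a : Fin r ⊕ Fin m) (t : Fin (r + m)) :
    (x t : R) ^ (m + q) *
        (compositeMatrix (hEval fun i => (x i : R)) (hEval fun i => (↑(x i)⁻¹ : R)) r m l u *
          coeffMatrix fun i => (x i : R)) a t =
      Sum.elim (fun _ => 1) (fun _ => (-1) ^ (r + m - 1) * ∏ i, (x i : R)) a *
        (x t : R) ^ (rho (alternantColumn r m a) + (r + m - 1 - (alternantColumn r m a : ℕ))) := by
  rcases a with i | j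
  · have hexp : m + q + (l i + i.rev) = rho i + (r + m - 1 - i) := by
      rw [hleft i i.2, Fin.val_rev]
      omega
    rw [compositeMatrix_mul_coeffMatrix_inl, ← pow_add, hexp]
    simp [alternantColumn]
  · have hcol : (alternantColumn r m (.inr j) : ℕ) = r + m - 1 - j := by
      simp only [alternantColumn, Equiv.trans_apply, Equiv.sumCongr_apply, Sum.map_inr,
        Fin.revPerm_apply, finSumFinEquiv_apply_right, Fin.val_natAdd, Fin.val_rev]
      omega
    have hexp : m + q =
        rho (r + m - 1 - j) + (r + m - 1 - (r + m - 1 - j)) + (u j + j.rev + 1) := by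
      have hj := hright j j.2
      rw [Fin.val_rev]
      omega
    rw [hexp, pow_add, mul_assoc, pow_mul_compositeMatrix_mul_coeffMatrix_inr, hcol, mul_comm]
    rfl

theorem compositeDet_mul_det_coeffMatrix {q : ℕ} {rho : ℕ → ℕ} (x : Fin (r + m) → Rˣ)
    (hleft : ∀ i < r, rho i = l i + q) (hright : ∀ j < m, rho (r + m - 1 - j) + u j = q) :
    (∏ i, (x i : R)) ^ (m + q) *
        (compositeDet (hEval fun i => (x i : R)) (hEval fun i => (↑(x i)⁻¹ : R)) r m l u *
          ((coeffMatrix fun i => (x i : R)).submatrix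
            (NatPartition.emptyEdgeEquiv r m) (alternantColumn r m)).det) =
      ((-1) ^ (r + m - 1) * ∏ i, (x i : R)) ^ m * alternant (fun i => (x i : R)) rho := by
  set e := alternantColumn r m
  set κ : R := (-1) ^ (r + m - 1) * ∏ i, (x i : R)
  have hcol : (∏ i, (x i : R)) ^ (m + q) = ∏ b, (x (e b) : R) ^ (m + q) := by
    rw [prod_pow, e.prod_comp fun i => (x i : R)]
  have hrow : κ ^ m = ∏ a : Fin r ⊕ Fin m, Sum.elim (fun _ => 1) (fun _ => κ) a := by
    simp
  have halt : alternant (fun i => (x i : R)) rho =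
      ((of fun i j : Fin (r + m) => (x i : R) ^ (rho j + (r + m - 1 - j)))ᵀ.submatrix e e).det := by
    rw [det_submatrix_equiv_self, det_transpose, alternant]
  rw [compositeDet, ← det_mul, submatrix_mul_equiv, halt, hcol, hrow, ← det_mul_row,
    ← det_mul_column]
  congr 1
  ext a b
  exact pow_mul_compositeMatrix_mul_coeffMatrix x hleft hright a (e b)

theorem alternant_eq_compositeDet_mul_alternant_zero {q : ℕ} {rho : ℕ → ℕ} (x : Fin (r + m) → Rˣ)
    (hleft : ∀ i < r, rho i = l i + q) (hright : ∀ j < m, rho (r + m - 1 - j) + u j = q) :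
    alternant (fun i => (x i : R)) rho = (∏ i, (x i : R)) ^ q *
      compositeDet (hEval fun i => (x i : R)) (hEval fun i => (↑(x i)⁻¹ : R)) r m l u *
        alternant (fun i => (x i : R)) 0 := by
  have hunit : IsUnit (((-1) ^ (r + m - 1) * ∏ i, (x i : R)) ^ m) := by
    rw [← Units.coe_prod]
    exact ((isUnit_one.neg.pow _).mul (Units.isUnit _)).pow m
  have hrho := compositeDet_mul_det_coeffMatrix x hleft hright
  have hempty := compositeDet_mul_det_coeffMatrix (l := 0) (u := 0) (rho := 0) (q := 0) x
    (by simp) (by simp)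
  rw [compositeDet_zero_zero (fun _ => hEval_of_neg _) (hEval_zero _) (fun _ => hEval_of_neg _)
    (hEval_zero _), one_mul, add_zero] at hempty
  refine hunit.mul_left_cancel ?_
  rw [← hrho, pow_add]
  linear_combination (∏ i, (x i : R)) ^ q * compositeDet (hEval fun i => (x i : R))
    (hEval fun i => (↑(x i)⁻¹ : R)) r m l u * hempty

end Composite

theorem statement10_general (R : Type*) [CommRing R] (r s q n : ℕ) (lam mu rho : ℕ → ℕ)
    (hlam_anti : Antitone lam) (hlam_len : ∀ j, r ≤ j → lam j = 0)
    (hmu_anti : Antitone mu) (hmu_len : ∀ j, s ≤ j → mu j = 0)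
    (hn : r + s ≤ n) (hq : mu 0 ≤ q)
    (hrho1 : ∀ j, j < r → rho j = lam j + q)
    (hrho2 : ∀ j, r ≤ j → j < n - s → rho j = q)
    (hrho3 : ∀ j, n - s ≤ j → j < n → rho j = q - mu (n - 1 - j))
    (x : Fin n → Rˣ) :
    alternant (fun i => (x i : R)) rho =
      (∏ i, (x i : R)) ^ q *
        (∑ᶠ τ : NatPartition,
          (-1 : R) ^ τ.size * jacobiTrudi (hEval fun i => (x i : R)) lam τ.parts (r + τ.length) *
            jacobiTrudi (hEval fun i => (↑(x i)⁻¹ : R)) mu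
              (fun j => conjugatePart τ.parts (j + 1)) (s + τ.parts 0)) *
        alternant (fun i => (x i : R)) 0 := by
  obtain ⟨m, rfl⟩ := Nat.exists_eq_add_of_le (show r ≤ n by omega)
  have hright (j : ℕ) (hj : j < m) : rho (r + m - 1 - j) + mu j = q := by
    have hle : mu j ≤ q := (hmu_anti (Nat.zero_le j)).trans hq
    by_cases hjs : j < s
    · rw [hrho3 _ (by omega) (by omega), show r + m - 1 - (r + m - 1 - j) = j by omega]
      omega
    · rw [hrho2 _ (by omega) (by omega), hmu_len j (by omega), add_zero]
  rw [← compositeDet_eq_finsum (fun _ => hEval_of_neg _) (hEval_zero _) (fun _ => hEval_of_neg _)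
    (hEval_zero _) hlam_anti hmu_anti hlam_len hmu_len (show s ≤ m by omega)]
  exact alternant_eq_compositeDet_mul_alternant_zero x hrho1 hright

/-- Let `K` be a field, `λ = (λ₁ ≥ … ≥ λ_r > 0)`,
`μ = (μ₁ ≥ … ≥ μ_s > 0)` partitions, `n ≥ r + s`, `q ≥ μ₁`, and `x₁, …, xₙ` pairwise
distinct nonzero elements of `K`.  With `ρ` the partition `ρ_j = λ_j + q` (`1 ≤ j ≤ r`),
`ρ_j = q` (`r < j ≤ n - s`), `ρ_j = q - μ_{n+1-j}` (`n - s < j ≤ n`), we have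
`det((x_i^{ρ_j + n - j})) / det((x_i^{n-j}))
  = (x₁⋯xₙ)^q · Σ_τ (-1)^{|τ|} s_{λ/τ}(x) · s_{μ/τ'}(x⁻¹)`,
the sum being over all partitions `τ` (only those fitting in an `n × n` rectangle
contribute, the remaining terms vanishing); the skew Schur functions are given by
Jacobi–Trudi determinants in the `h_k`.  In other words, the character of the
irreducible `GL_n(ℂ)`-representation of highest weight `(λ₁,…,λ_r,0,…,0,-μ_s,…,-μ₁)`
equals `Σ_τ (-1)^{|τ|} s_{λ/τ}(x) s_{μ/τ'}(x⁻¹)`. -/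
theorem statement10 (K : Type*) [Field K] (r s q n : ℕ)
    (lam mu rho : ℕ → ℕ)
    (hlam_anti : Antitone lam) (hlam_pos : ∀ j, j < r → 0 < lam j)
    (hlam_len : ∀ j, r ≤ j → lam j = 0)
    (hmu_anti : Antitone mu) (hmu_pos : ∀ j, j < s → 0 < mu j)
    (hmu_len : ∀ j, s ≤ j → mu j = 0)
    (hn : r + s ≤ n) (hq : mu 0 ≤ q)
    (hrho1 : ∀ j, j < r → rho j = lam j + q)
    (hrho2 : ∀ j, r ≤ j → j < n - s → rho j = q)
    (hrho3 : ∀ j, n - s ≤ j → j < n → rho j = q - mu (n - 1 - j))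
    (hrho4 : ∀ j, n ≤ j → rho j = 0)
    (x : Fin n → K) (hx0 : ∀ i, x i ≠ 0) (hxinj : Function.Injective x) :
    Matrix.det (Matrix.of fun i j : Fin n => x i ^ (rho j + (n - 1 - (j : ℕ)))) /
        Matrix.det (Matrix.of fun i j : Fin n => x i ^ (n - 1 - (j : ℕ))) =
      (∏ i, x i) ^ q *
        ∑ᶠ τ : NatPartition,
          (-1 : K) ^ τ.size *
            Matrix.det (Matrix.of fun i j : Fin (r + τ.length) =>
              hEval x ((lam i : ℤ) - τ.parts j - (i : ℕ) + (j : ℕ))) *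
            Matrix.det (Matrix.of fun i j : Fin (s + τ.parts 0) =>
              hEval (fun t => (x t)⁻¹)
                ((mu i : ℤ) - conjugatePart τ.parts ((j : ℕ) + 1)
                  - (i : ℕ) + (j : ℕ))) := by
  rw [← alternant_zero, div_eq_iff (alternant_zero_ne_zero hxinj)]
  exact statement10_general K r s q n lam mu rho hlam_anti hlam_len hmu_anti hmu_len hn hq
    hrho1 hrho2 hrho3 fun i => Units.mk0 (x i) (hx0 i)
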